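/- Let g : ℝ → ℂ be a measurable function admitting an extension g̃ : {ω ∈ ℂ : Im ω ≥ 0} → ℂ such that (i) g̃ is analytic on the open upper half-plane {ω : Im ω > 0}; (ii) |g̃(ω)| ≤ 1 for all ω with Im ω ≥ 0; (iii) lim_{b→0+} g̃(a+ib) = g(a) for Lebesgue-almost all a ∈ ℝ. Then multiplication by g leaves invariant the subspace of negative-frequency functions: if φ ∈ L²(ℝ) and (F*φ)(y) = 0 for almost all y > 0, then (F*(g·φ))(y) = 0 for almost all y > 0. -/

import Mathlib

open MeasureTheory Complex Filter Set

noncomputable section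

/-- `L²(ℝ)` with respect to Lebesgue measure. -/
abbrev H2 : Type := Lp ℂ 2 (volume : Measure ℝ)

/-- `𝓕` is the Fourier–Plancherel operator: a unitary on `L²(ℝ)` which is given on
`L¹ ∩ L²` by the usual integral formula `(𝓕φ)(y) = (2π)^{-1/2} ∫ e^{-iyx} φ(x) dx`, and whose
inverse `𝓕* = 𝓕⁻¹` is given on `L¹ ∩ L²` by `(𝓕*φ)(y) = (2π)^{-1/2} ∫ e^{iyx} φ(x) dx`. -/
def IsFourier (𝓕 : H2 ≃ₗᵢ[ℂ] H2) : Prop :=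
  (∀ φ : H2, Integrable (⇑φ) volume →
      (⇑(𝓕 φ) : ℝ → ℂ) =ᵐ[volume]
        fun y : ℝ => (Real.sqrt (2 * Real.pi) : ℂ)⁻¹ *
          ∫ x : ℝ, Complex.exp (-(Complex.I * y * x)) * φ x) ∧
  (∀ φ : H2, Integrable (⇑φ) volume →
      (⇑(𝓕.symm φ) : ℝ → ℂ) =ᵐ[volume]
        fun y : ℝ => (Real.sqrt (2 * Real.pi) : ℂ)⁻¹ *
          ∫ x : ℝ, Complex.exp (Complex.I * y * x) * φ x)

/-- The multiplication operator `g(M)` on `L²`: `φ ↦ g·φ` (pointwise product), defined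
whenever the product is again in `L²`. -/
def mulLp {μ : Measure ℝ} (g : ℝ → ℂ) (φ : Lp ℂ 2 μ) : Lp ℂ 2 μ := by
  classical exact if h : MemLp (fun x => g x * φ x) 2 μ then h.toLp _ else 0

/-- `gt` is an extension of `g : ℝ → ℂ` to the closed upper half-plane which is analytic on the
open upper half-plane, bounded by one there, and has non-tangential boundary values `g` a.e. -/
structure HardyExt (g : ℝ → ℂ) (gt : ℂ → ℂ) : Prop where
  agree : ∀ a : ℝ, gt (a : ℂ) = g a
  analytic : DifferentiableOn ℂ gt {ω : ℂ | 0 < ω.im}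
  bounded : ∀ ω : ℂ, 0 ≤ ω.im → ‖gt ω‖ ≤ 1
  boundary : ∀ᵐ a : ℝ ∂volume,
    Tendsto (fun b : ℝ => gt ((a : ℂ) + b * Complex.I)) (nhdsWithin 0 (Ioi 0)) (nhds (g a))

/-!
By duality it suffices to test against indicators of intervals: for `0 ≤ a ≤ b` and `c ≤ d ≤ 0` one
needs `⟪F χ_{(a,b]}, g · F χ_{(c,d]}⟫ = 0`, as then `F*(ḡ · F χ_{(a,b]})` vanishes on the negative
half-line and is orthogonal to `F*φ`. Up to a constant, that inner product is the integral over `ℝ`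
of the boundary values of `g̃(z) (∫_a^b e^{izy} dy) (∫_{-d}^{-c} e^{izy} dy)`. Both exponential
integrals run over positive `y`, so they are bounded and `O(1 / |z|)` on the upper half-plane, and
the contour can be pushed up to `+i∞`.
-/

open scoped Topology ComplexConjugate ENNReal

section QuadraticDecay

theorem tendsto_const_mul_inv_one_add_sq_atTop (K : ℝ) :
    Tendsto (fun R : ℝ => K * (1 + R ^ 2)⁻¹) atTop (𝓝 0) := by
  have hden : Tendsto (fun R : ℝ => 1 + R ^ 2) atTop atTop :=
    tendsto_atTop_add_const_left _ _ (tendsto_pow_atTop two_ne_zero)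
  simpa using hden.inv_tendsto_atTop.const_mul K

variable {E : Type*} [NormedAddCommGroup E] [NormedSpace ℂ E]

theorem integral_horizontal_sub_integral_horizontal_eq {f : ℂ → E}
    (hf : DifferentiableOn ℂ f {ω : ℂ | 0 < ω.im}) (p q : ℝ) {b c : ℝ} (hb : 0 < b) (hc : 0 < c) :
    (∫ x in p..q, f (x + b * I)) - ∫ x in p..q, f (x + c * I) =
      I • (∫ y in b..c, f (p + y * I)) - I • ∫ y in b..c, f (q + y * I) := by
  have hrect : uIcc p q ×ℂ uIcc b c ⊆ {ω : ℂ | 0 < ω.im} :=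
    fun ω hω => (lt_min hb hc).trans_le hω.2.1
  have hcauchy := integral_boundary_rect_eq_zero_of_differentiableOn f
    (p + b * I) (q + c * I) (hf.mono (by simpa using hrect))
  simp only [add_re, ofReal_re, mul_re, I_re, I_im, ofReal_im, add_im, mul_im, mul_zero,
    mul_one, sub_self, add_zero, zero_add] at hcauchy
  linear_combination (norm := module) hcauchy

/-- Functions holomorphic on the open upper half-plane and bounded there by `K / (1 + ‖ω‖²)`. The
decay makes integrals along horizontal lines converge and allows contours to be closed at
infinity. -/
structure HolomorphicQuadraticDecay (f : ℂ → E) (K : ℝ) : Prop where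
  differentiableOn : DifferentiableOn ℂ f {ω : ℂ | 0 < ω.im}
  norm_le : ∀ ω : ℂ, 0 < ω.im → ‖f ω‖ ≤ K * (1 + ‖ω‖ ^ 2)⁻¹

namespace HolomorphicQuadraticDecay

variable {f : ℂ → E} {K : ℝ}

theorem const_nonneg (hf : HolomorphicQuadraticDecay f K) : 0 ≤ K :=
  nonneg_of_mul_nonneg_left ((norm_nonneg _).trans (hf.norm_le I (by simp))) (by positivity)

theorem norm_le_re (hf : HolomorphicQuadraticDecay f K) (x : ℝ) {y : ℝ} (hy : 0 < y) :
    ‖f (x + y * I)‖ ≤ K * (1 + x ^ 2)⁻¹ := by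
  have hK := hf.const_nonneg
  refine (hf.norm_le _ (by simpa using hy)).trans ?_
  rw [Complex.sq_norm, normSq_add_mul_I]
  gcongr
  exact le_add_of_nonneg_right (sq_nonneg y)

theorem norm_le_im (hf : HolomorphicQuadraticDecay f K) (x : ℝ) {y : ℝ} (hy : 0 < y) :
    ‖f (x + y * I)‖ ≤ K * (1 + y ^ 2)⁻¹ := by
  have hK := hf.const_nonneg
  refine (hf.norm_le _ (by simpa using hy)).trans ?_
  rw [Complex.sq_norm, normSq_add_mul_I]
  gcongr
  exact le_add_of_nonneg_left (sq_nonneg x)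

theorem continuous_horizontal (hf : HolomorphicQuadraticDecay f K) {y : ℝ} (hy : 0 < y) :
    Continuous fun x : ℝ => f (x + y * I) :=
  hf.differentiableOn.continuousOn.comp_continuous (by fun_prop) fun x => by simpa using hy

theorem integrable_horizontal (hf : HolomorphicQuadraticDecay f K) {y : ℝ} (hy : 0 < y) :
    Integrable fun x : ℝ => f (x + y * I) :=
  (integrable_inv_one_add_sq.const_mul K).mono'
    (hf.continuous_horizontal hy).aestronglyMeasurable (.of_forall fun x => hf.norm_le_re x hy)

theorem tendsto_integral_horizontal (hf : HolomorphicQuadraticDecay f K) {l : Filter ℝ}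
    [l.IsCountablyGenerated] (hl : ∀ᶠ y in l, 0 < y) {f₀ : ℝ → E}
    (hlim : ∀ᵐ x : ℝ, Tendsto (fun y : ℝ => f (x + y * I)) l (𝓝 (f₀ x))) :
    Tendsto (fun y : ℝ => ∫ x : ℝ, f (x + y * I)) l (𝓝 (∫ x, f₀ x)) :=
  tendsto_integral_filter_of_dominated_convergence (fun x => K * (1 + x ^ 2)⁻¹)
    (hl.mono fun _ hy => (hf.continuous_horizontal hy).aestronglyMeasurable)
    (hl.mono fun _ hy => .of_forall fun x => hf.norm_le_re x hy)
    (integrable_inv_one_add_sq.const_mul K) hlim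

theorem norm_integral_vertical_le (hf : HolomorphicQuadraticDecay f K) (x : ℝ) {b c : ℝ}
    (hb : 0 < b) (hc : 0 < c) :
    ‖∫ y in b..c, f (x + y * I)‖ ≤ K * (1 + x ^ 2)⁻¹ * |c - b| :=
  intervalIntegral.norm_integral_le_of_norm_le_const fun _ hy =>
    hf.norm_le_re x ((lt_min hb hc).trans hy.1)

theorem integral_horizontal_eq (hf : HolomorphicQuadraticDecay f K) {b c : ℝ} (hb : 0 < b)
    (hc : 0 < c) : ∫ x : ℝ, f (x + b * I) = ∫ x : ℝ, f (x + c * I) := by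
  have hdiff : Tendsto (fun R : ℝ => (∫ x in (-R)..R, f (x + b * I)) -
      ∫ x in (-R)..R, f (x + c * I)) atTop (𝓝 0) := by
    refine squeeze_zero_norm (a := fun R => 2 * (K * (1 + R ^ 2)⁻¹ * |c - b|)) (fun R => ?_) ?_
    · have hleft := hf.norm_integral_vertical_le (-R) hb hc
      have hright := hf.norm_integral_vertical_le R hb hc
      rw [neg_sq] at hleft
      rw [integral_horizontal_sub_integral_horizontal_eq hf.differentiableOn _ _ hb hc]
      refine (norm_sub_le _ _).trans ?_
      rw [norm_smul, norm_smul, norm_I, one_mul, one_mul]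
      linarith
    · simpa using ((tendsto_const_mul_inv_one_add_sq_atTop K).mul_const |c - b|).const_mul 2
  have hlim {y : ℝ} (hy : 0 < y) := intervalIntegral_tendsto_integral
    (hf.integrable_horizontal hy) tendsto_neg_atTop_atBot tendsto_id
  exact sub_eq_zero.mp (tendsto_nhds_unique ((hlim hb).sub (hlim hc)) hdiff)

theorem integral_horizontal_eq_zero (hf : HolomorphicQuadraticDecay f K) {b : ℝ} (hb : 0 < b) :
    ∫ x : ℝ, f (x + b * I) = 0 := by
  have hpointwise (x : ℝ) : Tendsto (fun y : ℝ => f (x + y * I)) atTop (𝓝 0) :=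
    squeeze_zero_norm' ((eventually_gt_atTop 0).mono fun y hy => hf.norm_le_im x hy)
      (tendsto_const_mul_inv_one_add_sq_atTop K)
  have hlim := hf.tendsto_integral_horizontal (eventually_gt_atTop 0) (.of_forall hpointwise)
  rw [integral_zero] at hlim
  refine tendsto_nhds_unique (tendsto_const_nhds.congr' ?_) hlim
  filter_upwards [eventually_gt_atTop 0] with c hc using hf.integral_horizontal_eq hb hc

theorem integral_boundary_eq_zero (hf : HolomorphicQuadraticDecay f K) {f₀ : ℝ → E}
    (hlim : ∀ᵐ x : ℝ, Tendsto (fun y : ℝ => f (x + y * I)) (𝓝[>] 0) (𝓝 (f₀ x))) :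
    ∫ x, f₀ x = 0 := by
  have hpos : ∀ᶠ y : ℝ in 𝓝[>] 0, 0 < y := self_mem_nhdsWithin
  refine tendsto_nhds_unique (hf.tendsto_integral_horizontal hpos hlim)
    (tendsto_const_nhds.congr' ?_)
  filter_upwards [hpos] with y hy using (hf.integral_horizontal_eq_zero hy).symm

end HolomorphicQuadraticDecay

end QuadraticDecay

section ExpIntegral

/-- The exponential integral `∫_p^q e^{izy} dy`, as a function of a complex frequency `z`. For real
`z` it is, up to normalization, the Fourier transform of the indicator of `(-q, -p]`. -/
def expIntegral (p q : ℝ) (z : ℂ) : ℂ := ∫ y in p..q, Complex.exp (I * z * y)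

theorem expIntegral_of_ne_zero (p q : ℝ) {z : ℂ} (hz : z ≠ 0) :
    expIntegral p q z = (Complex.exp (I * z * q) - Complex.exp (I * z * p)) / (I * z) :=
  integral_exp_mul_complex (mul_ne_zero I_ne_zero hz)

theorem continuous_expIntegral (p q : ℝ) : Continuous (expIntegral p q) :=
  intervalIntegral.continuous_parametric_intervalIntegral_of_continuous' (by fun_prop) p q

theorem differentiable_expIntegral (p q : ℝ) : Differentiable ℂ (expIntegral p q) := by
  have hpunctured : DifferentiableOn ℂ (expIntegral p q) (univ \ {0}) := by
    have hquot : DifferentiableOn ℂ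
        (fun z : ℂ => (Complex.exp (I * z * q) - Complex.exp (I * z * p)) / (I * z))
        (univ \ {0}) :=
      .div (by fun_prop) (by fun_prop) fun z hz => mul_ne_zero I_ne_zero hz.2
    exact hquot.congr fun z hz => expIntegral_of_ne_zero p q hz.2
  exact differentiableOn_univ.mp <|
    (differentiableOn_compl_singleton_and_continuousAt_iff univ_mem).mp
      ⟨hpunctured, (continuous_expIntegral p q).continuousAt⟩

theorem conj_expIntegral (p q : ℝ) (z : ℂ) :
    conj (expIntegral p q z) = expIntegral (-q) (-p) (conj z) := by
  rw [expIntegral, expIntegral, ← intervalIntegral.integral_comp_neg,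
    ← intervalIntegral.intervalIntegral_conj]
  simp [← Complex.exp_conj]

theorem norm_exp_I_mul_mul_le_one {z : ℂ} (hz : 0 ≤ z.im) {y : ℝ} (hy : 0 ≤ y) :
    ‖Complex.exp (I * z * y)‖ ≤ 1 := by
  rw [Complex.norm_exp, Real.exp_le_one_iff]
  simpa using mul_nonneg hz hy

variable {p q p' q' : ℝ} {z : ℂ}

theorem norm_expIntegral_le (hp : 0 ≤ p) (hpq : p ≤ q) (hz : 0 ≤ z.im) :
    ‖expIntegral p q z‖ ≤ q - p := by
  have hbound : ∀ y ∈ uIoc p q, ‖Complex.exp (I * z * y)‖ ≤ 1 := fun y hy => by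
    rw [uIoc_of_le hpq] at hy
    exact norm_exp_I_mul_mul_le_one hz (hp.trans hy.1.le)
  simpa [expIntegral, abs_of_nonneg (sub_nonneg.mpr hpq)] using
    intervalIntegral.norm_integral_le_of_norm_le_const hbound

theorem norm_mul_norm_expIntegral_le_two (hp : 0 ≤ p) (hq : 0 ≤ q) (hz : 0 ≤ z.im) :
    ‖z‖ * ‖expIntegral p q z‖ ≤ 2 := by
  rcases eq_or_ne z 0 with rfl | hz0
  · simp
  rw [expIntegral_of_ne_zero p q hz0, norm_div, norm_mul, norm_I, one_mul,
    mul_div_cancel₀ _ (norm_ne_zero_iff.mpr hz0)]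
  refine (norm_sub_le _ _).trans ?_
  linarith [norm_exp_I_mul_mul_le_one hz hp, norm_exp_I_mul_mul_le_one hz hq]

theorem norm_expIntegral_mul_expIntegral_le (hp : 0 ≤ p) (hpq : p ≤ q) (hp' : 0 ≤ p')
    (hpq' : p' ≤ q') (hz : 0 ≤ z.im) :
    ‖expIntegral p q z * expIntegral p' q' z‖ ≤
      ((q - p) * (q' - p') + 2 * 2) * (1 + ‖z‖ ^ 2)⁻¹ := by
  rw [← div_eq_mul_inv, le_div_iff₀ (by positivity), norm_mul]
  calc ‖expIntegral p q z‖ * ‖expIntegral p' q' z‖ * (1 + ‖z‖ ^ 2)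
      = ‖expIntegral p q z‖ * ‖expIntegral p' q' z‖ +
          ‖z‖ * ‖expIntegral p q z‖ * (‖z‖ * ‖expIntegral p' q' z‖) := by ring
    _ ≤ (q - p) * (q' - p') + 2 * 2 := by
      gcongr
      · exact norm_expIntegral_le hp hpq hz
      · exact norm_expIntegral_le hp' hpq' hz
      · exact norm_mul_norm_expIntegral_le_two hp (hp.trans hpq) hz
      · exact norm_mul_norm_expIntegral_le_two hp' (hp'.trans hpq') hz

theorem integral_boundary_mul_expIntegral_mul_expIntegral_eq_zero {f : ℂ → ℂ} {f₀ : ℝ → ℂ} {C : ℝ}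
    (hf : DifferentiableOn ℂ f {ω : ℂ | 0 < ω.im}) (hC : ∀ ω : ℂ, 0 < ω.im → ‖f ω‖ ≤ C)
    (hlim : ∀ᵐ x : ℝ, Tendsto (fun y : ℝ => f (x + y * I)) (𝓝[>] 0) (𝓝 (f₀ x)))
    (hp : 0 ≤ p) (hpq : p ≤ q) (hp' : 0 ≤ p') (hpq' : p' ≤ q') :
    ∫ x : ℝ, f₀ x * (expIntegral p q x * expIntegral p' q' x) = 0 := by
  have hdecay : HolomorphicQuadraticDecay (fun ω => f ω * (expIntegral p q ω * expIntegral p' q' ω))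
      (C * ((q - p) * (q' - p') + 2 * 2)) := by
    refine ⟨hf.mul ((differentiable_expIntegral p q).mul
      (differentiable_expIntegral p' q')).differentiableOn, fun ω hω => ?_⟩
    rw [norm_mul, mul_assoc]
    have hC0 : 0 ≤ C := (norm_nonneg _).trans (hC ω hω)
    gcongr
    exacts [hC ω hω, norm_expIntegral_mul_expIntegral_le hp hpq hp' hpq' hω.le]
  refine hdecay.integral_boundary_eq_zero ?_
  filter_upwards [hlim] with x hx
  have hexp : Continuous fun y : ℝ =>
      expIntegral p q (x + y * I) * expIntegral p' q' (x + y * I) :=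
    ((continuous_expIntegral p q).comp (by fun_prop)).mul
      ((continuous_expIntegral p' q').comp (by fun_prop))
  refine hx.mul (Tendsto.mono_left ?_ nhdsWithin_le_nhds)
  simpa using hexp.tendsto 0

end ExpIntegral

section SquareIntegrable

theorem ae_restrict_eq_zero_of_forall_setIntegral_Ioc_eq_zero {E : Type*} [NormedAddCommGroup E]
    [NormedSpace ℝ E] [CompleteSpace E] {w : ℝ → E} (hw : LocallyIntegrable w) {U : Set ℝ}
    (hU : IsOpen U) (h : ∀ a b : ℝ, a ≤ b → Icc a b ⊆ U → ∫ x in Ioc a b, w x = 0) :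
    ∀ᵐ x ∂(volume.restrict U), w x = 0 := by
  rw [ae_restrict_iff' hU.measurableSet]
  filter_upwards [LocallyIntegrable.ae_hasDerivAt_integral hw] with x hderiv hxU
  have hnear : ∀ᶠ y in 𝓝 x, uIcc x y ⊆ U :=
    (tendsto_const_nhds.uIcc tendsto_id).eventually
      (eventually_smallSets_subset.mpr (hU.mem_nhds hxU))
  refine (hderiv x).unique ((hasDerivAt_const x 0).congr_of_eventuallyEq ?_)
  filter_upwards [hnear] with y hy
  rcases le_total x y with hxy | hyx
  · rw [intervalIntegral.integral_of_le hxy, h x y hxy (uIcc_of_le hxy ▸ hy)]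
  · rw [intervalIntegral.integral_of_ge hyx, h y x hyx (uIcc_of_ge hyx ▸ hy), neg_zero]

theorem inner_eq_zero_of_ae_restrict_eq_zero {α 𝕜 E : Type*} [MeasurableSpace α] {μ : Measure α}
    [RCLike 𝕜] [NormedAddCommGroup E] [InnerProductSpace 𝕜 E] {u v : Lp E 2 μ} (s : Set α)
    (hu : ∀ᵐ x ∂(μ.restrict s), u x = 0) (hv : ∀ᵐ x ∂(μ.restrict sᶜ), v x = 0) :
    inner 𝕜 u v = 0 := by
  rw [L2.inner_def]
  refine integral_eq_zero_of_ae (ae_of_ae_restrict_of_ae_restrict_compl s ?_ ?_)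
  · filter_upwards [hu] with x hx using by simp [hx]
  · filter_upwards [hv] with x hx using by simp [hx]

/-- The indicator function of `(a, b]` as an element of `L²(ℝ)`. -/
def intervalIndicator (a b : ℝ) : H2 :=
  indicatorConstLp 2 (measurableSet_Ioc : MeasurableSet (Ioc a b)) measure_Ioc_lt_top.ne (1 : ℂ)

theorem ae_restrict_eq_zero_of_forall_inner_intervalIndicator_eq_zero {w : H2} {U : Set ℝ}
    (hU : IsOpen U)
    (h : ∀ a b : ℝ, a ≤ b → Icc a b ⊆ U → inner ℂ (intervalIndicator a b) w = 0) :
    ∀ᵐ x ∂(volume.restrict U), w x = 0 := by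
  refine ae_restrict_eq_zero_of_forall_setIntegral_Ioc_eq_zero
    ((Lp.memLp w).locallyIntegrable one_le_two) hU fun a b hab hsub => ?_
  rw [← h a b hab hsub]
  exact (L2.inner_indicatorConstLp_one _ _ w).symm

theorem IsFourier.coeFn_intervalIndicator {𝓕 : H2 ≃ₗᵢ[ℂ] H2} (h𝓕 : IsFourier 𝓕) {a b : ℝ}
    (hab : a ≤ b) :
    𝓕 (intervalIndicator a b) =ᵐ[volume]
      fun x : ℝ => (Real.sqrt (2 * Real.pi) : ℂ)⁻¹ * expIntegral (-b) (-a) x := by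
  filter_upwards [h𝓕.1 (intervalIndicator a b) (integrable_indicatorConstLp _ _ _)] with x hx
  rw [hx]
  congr 1
  calc ∫ y : ℝ, Complex.exp (-(I * x * y)) * intervalIndicator a b y
      = ∫ y : ℝ, (Ioc a b).indicator (fun y : ℝ => Complex.exp (-(I * x * y))) y := by
        refine integral_congr_ae ?_
        have hind : intervalIndicator a b =ᵐ[volume] (Ioc a b).indicator fun _ => (1 : ℂ) :=
          indicatorConstLp_coeFn
        filter_upwards [hind] with y hy
        by_cases hmem : y ∈ Ioc a b <;> simp [hy, hmem]
    _ = ∫ y in a..b, Complex.exp (-(I * x * y)) := by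
        rw [integral_indicator measurableSet_Ioc, intervalIntegral.integral_of_le hab]
    _ = expIntegral (-b) (-a) x := by
        rw [expIntegral, ← intervalIntegral.integral_comp_neg]
        simp

variable {μ : Measure ℝ} {g : ℝ → ℂ}

theorem coeFn_mulLp (hg : MemLp g ∞ μ) (φ : Lp ℂ 2 μ) :
    mulLp g φ =ᵐ[μ] fun x => g x * φ x := by
  have hmem : MemLp (fun x => g x * φ x) 2 μ := (Lp.memLp φ).mul hg
  rw [mulLp, dif_pos hmem]
  exact hmem.coeFn_toLp

theorem inner_mulLp_right (hg : MemLp g ∞ μ) (u v : Lp ℂ 2 μ) :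
    inner ℂ u (mulLp g v) = inner ℂ (mulLp (star g) u) v := by
  rw [L2.inner_def, L2.inner_def]
  refine integral_congr_ae ?_
  filter_upwards [coeFn_mulLp hg v, coeFn_mulLp hg.star u] with x hv hu
  rw [hv, hu]
  simp only [RCLike.inner_apply, map_mul, Pi.star_apply, RCLike.star_def, conj_conj]
  ring

end SquareIntegrable

namespace HardyExt

variable {g : ℝ → ℂ} {gt : ℂ → ℂ} {𝓕 : H2 ≃ₗᵢ[ℂ] H2}

theorem memLp_top (hgt : HardyExt g gt) (hg : Measurable g) : MemLp g ∞ :=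
  memLp_top_of_bound hg.aestronglyMeasurable 1 <| .of_forall fun x => by
    rw [← hgt.agree]
    exact hgt.bounded x (by simp)

theorem inner_fourier_mulLp_fourier_eq_zero (hgt : HardyExt g gt) (hg : Measurable g)
    (h𝓕 : IsFourier 𝓕) {a b c d : ℝ} (ha : 0 ≤ a) (hab : a ≤ b) (hcd : c ≤ d) (hd : d ≤ 0) :
    inner ℂ (𝓕 (intervalIndicator a b)) (mulLp g (𝓕 (intervalIndicator c d))) = 0 := by
  have hcontour : ∫ x : ℝ, g x * (expIntegral a b x * expIntegral (-d) (-c) x) = 0 :=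
    integral_boundary_mul_expIntegral_mul_expIntegral_eq_zero hgt.analytic
      (fun ω hω => hgt.bounded ω hω.le) hgt.boundary ha hab (neg_nonneg.mpr hd)
      (neg_le_neg hcd)
  rw [L2.inner_def, ← mul_zero ((Real.sqrt (2 * Real.pi) : ℂ)⁻¹ ^ 2), ← hcontour,
    ← integral_const_mul]
  refine integral_congr_ae ?_
  filter_upwards [coeFn_mulLp (hgt.memLp_top hg) (𝓕 (intervalIndicator c d)),
    h𝓕.coeFn_intervalIndicator hab, h𝓕.coeFn_intervalIndicator hcd] with x hmul hFab hFcd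
  rw [hmul, hFab, hFcd]
  simp only [RCLike.inner_apply, map_mul, conj_expIntegral, map_inv₀, conj_ofReal, neg_neg]
  ring

theorem fourier_symm_mulLp_star_fourier_ae_eq_zero (hgt : HardyExt g gt) (hg : Measurable g)
    (h𝓕 : IsFourier 𝓕) {a b : ℝ} (ha : 0 ≤ a) (hab : a ≤ b) :
    ∀ᵐ y ∂(volume.restrict (Iio (0 : ℝ))),
      𝓕.symm (mulLp (star g) (𝓕 (intervalIndicator a b))) y = 0 := by
  refine ae_restrict_eq_zero_of_forall_inner_intervalIndicator_eq_zero isOpen_Iio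
    fun c d hcd hsub => ?_
  have hd : d ≤ 0 := (hsub (right_mem_Icc.mpr hcd)).le
  rw [← 𝓕.inner_map_map, 𝓕.apply_symm_apply, ← inner_conj_symm,
    ← inner_mulLp_right (hgt.memLp_top hg),
    hgt.inner_fourier_mulLp_fourier_eq_zero hg h𝓕 ha hab hcd hd, map_zero]

end HardyExt

/-- If a measurable `g : ℝ → ℂ` has an extension to the closed upper
half-plane, analytic on the open half-plane, bounded by one, with boundary values `g` a.e.,
then multiplication by `g` leaves the subspace of negative-frequency functions invariant:
if `(F*φ)(y) = 0` for a.e. `y > 0` then `(F*(g·φ))(y) = 0` for a.e. `y > 0`. -/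
theorem statement1 (g : ℝ → ℂ) (hg : Measurable g) (gt : ℂ → ℂ) (hgt : HardyExt g gt)
    (𝓕 : H2 ≃ₗᵢ[ℂ] H2) (h𝓕 : IsFourier 𝓕) (φ : H2)
    (hφ : ∀ᵐ y ∂(volume.restrict (Set.Ioi (0 : ℝ))), (𝓕.symm φ) y = 0) :
    ∀ᵐ y ∂(volume.restrict (Set.Ioi (0 : ℝ))), (𝓕.symm (mulLp g φ)) y = 0 := by
  refine ae_restrict_eq_zero_of_forall_inner_intervalIndicator_eq_zero isOpen_Ioi
    fun a b hab hsub => ?_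
  have ha : 0 ≤ a := (hsub (left_mem_Icc.mpr hab)).le
  have hφ' : ∀ᵐ y ∂(volume.restrict (Iio (0 : ℝ))ᶜ), (𝓕.symm φ) y = 0 := by
    rwa [compl_Iio, ← Measure.restrict_congr_set Ioi_ae_eq_Ici]
  rw [← 𝓕.inner_map_map, 𝓕.apply_symm_apply, inner_mulLp_right (hgt.memLp_top hg),
    ← 𝓕.symm.inner_map_map]
  exact inner_eq_zero_of_ae_restrict_eq_zero (Iio 0)
    (hgt.fourier_symm_mulLp_star_fourier_ae_eq_zero hg h𝓕 ha hab) hφ'
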